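/- Linear-order STV satisfies Proportionality for Solid Coalitions: for every profile of n linear orders over C, every committee size k, and every committee W returned by any execution of Approval-STV on this profile (which coincides with classic STV on linear-order profiles), the following holds with quota q = n/(k+1): for every integer ℓ ≥ 1, every set of voters S ⊆ N with |S| > ℓ·q, and every set T ⊆ C with |T| ≥ ℓ such that every voter in S ranks every candidate of T strictly above every candidate of C \ T, we have |W ∩ T| ≥ ℓ. -/

import Mathlib

/-!
Fix a solid coalition `S` for `T` with `|S| > ℓ·q`. As long as fewer than `ℓ` members of `T` have
been selected, two things hold throughout the execution (`PSCInvariant`): the selected and the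
remaining members of `T` together number at least `ℓ`, and `S` has spent at most `q` for each
selected member of `T`.

The second holds because voters of `S` support only members of `T` while one of them remains
(`not_mem_suppSet_of_solid`), so they never pay for outsiders. The first could only break by
eliminating a member of `T` when exactly `r = ℓ - |W ∩ T| > 0` of them remain. But then `S` still
owns more than `ℓ·q - |W ∩ T|·q = r·q`, and each voter of `S` supports one of these `r`
candidates, so by pigeonhole one of them is affordable and no elimination is allowed
(`exists_eligible`). When no candidate remains, the invariant forces `|W ∩ T| ≥ ℓ`.
-/

open Finset

attribute [local instance] Classical.propDecidable

/-- A weak order on a candidate type `C`: a complete and transitive binary relation. -/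
structure WeakOrder (C : Type*) where
  rel : C → C → Prop
  total : ∀ a b, rel a b ∨ rel b a
  trans : ∀ a b c, rel a b → rel b c → rel a c

namespace WeakOrder

variable {C : Type*}

/-- Strict preference. -/
def strict (w : WeakOrder C) (a b : C) : Prop :=
  w.rel a b ∧ ¬ w.rel b a

/-- Indifference. -/
def indiff (w : WeakOrder C) (a b : C) : Prop :=
  w.rel a b ∧ w.rel b a

/-- The set of top-ranked candidates of `w` within the candidate set `A`. -/
noncomputable def topSet (w : WeakOrder C) (A : Finset C) : Finset C :=
  A.filter fun c => ∀ d ∈ A, w.rel c d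

variable [DecidableEq C]

/-- Number of candidates in `A` strictly preferred to `a`. -/
noncomputable def cardAbove (w : WeakOrder C) (A : Finset C) (a : C) : ℕ :=
  (A.filter fun b => w.strict b a).card

/-- The (0-based) index of the indifference class of `a` within `A`
(0 = top indifference class). -/
noncomputable def classIdx (w : WeakOrder C) (A : Finset C) (a : C) : ℕ :=
  ((A.filter fun b => w.strict b a).image (w.cardAbove A)).card

/-- The number of indifference classes of `w` on `A`. -/
noncomputable def numClasses (w : WeakOrder C) (A : Finset C) : ℕ :=
  (A.image (w.cardAbove A)).card

/-- The order type of `w` on `A`: the list of sizes of its indifference classes,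
from the top class downwards. -/
noncomputable def orderType (w : WeakOrder C) (A : Finset C) : List ℕ :=
  (List.range (w.numClasses A)).map fun j => (A.filter fun a => w.classIdx A a = j).card

end WeakOrder

/-- Weak order induced by a rank function (smaller rank = more preferred). -/
def ofRank {C : Type*} (ρ : C → ℕ) : WeakOrder C where
  rel a b := ρ a ≤ ρ b
  total a b := le_total _ _
  trans _ _ _ hab hbc := le_trans hab hbc

section Rules

variable {C N : Type*} [DecidableEq C] [Fintype N]

/-- The score of candidate `a` in profile `P` on remaining candidate set `A`,
under the scoring system `s` (which maps an order type and a 0-based class index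
to a real score). -/
noncomputable def totalScore (s : List ℕ → ℕ → ℝ) (P : N → WeakOrder C)
    (A : Finset C) (a : C) : ℝ :=
  ∑ i : N, s ((P i).orderType A) ((P i).classIdx A a)

/-- The set of lowest-scoring candidates in `A`. -/
noncomputable def lowest (s : List ℕ → ℕ → ℝ) (P : N → WeakOrder C)
    (A : Finset C) : Finset C :=
  A.filter fun c => ∀ d ∈ A, totalScore s P A c ≤ totalScore s P A d

/-- Fuel-based helper for the elimination scoring rule. -/
noncomputable def winnersAux (s : List ℕ → ℕ → ℝ) (P : N → WeakOrder C) :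
    ℕ → Finset C → Finset C
  | 0, A => A
  | n + 1, A =>
    if A.card ≤ 1 then A
    else (lowest s P A).biUnion fun c => winnersAux s P n (A.erase c)

/-- The elimination scoring rule associated with scoring system `s`: repeatedly
eliminate a lowest-scoring candidate (parallel-universe tie-breaking) until one
candidate remains. -/
noncomputable def winners (s : List ℕ → ℕ → ℝ) (P : N → WeakOrder C)
    (A : Finset C) : Finset C :=
  winnersAux s P A.card A

/-- Approval score: the number of voters ranking `c` in their top indifference
class within `A`. -/
noncomputable def approvalScore (P : N → WeakOrder C) (A : Finset C) (c : C) : ℕ :=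
  (Finset.univ.filter fun i => c ∈ (P i).topSet A).card

end Rules

/-- The approval scoring system: `s(τ) = (1,0,…,0)` for every order type `τ`
(with `s(τ) = (0)` when `|τ| = 1`). -/
noncomputable def approvalScoring : List ℕ → ℕ → ℝ :=
  fun τ j => if j = 0 ∧ 2 ≤ τ.length then 1 else 0

/-- The split scoring system: `s(τ) = (1/τ(1),0,…,0)` for every order type `τ`
(with `s(τ) = (0)` when `|τ| = 1`). -/
noncomputable def splitScoring : List ℕ → ℕ → ℝ :=
  fun τ j => if j = 0 ∧ 2 ≤ τ.length then ((τ.headI : ℝ))⁻¹ else 0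

/-- The Borda-style scoring system:
`s(τ) = (m−1, m−1−τ(1), …, m−1−∑_{i<k−1} τ(i))` where `m = τ.sum`. -/
noncomputable def bordaScoring : List ℕ → ℕ → ℝ :=
  fun τ j => ((τ.sum : ℝ) - 1) - (((τ.take j).sum : ℕ) : ℝ)

/-- Nonnegativity of a scoring system. -/
def NonnegSys (s : List ℕ → ℕ → ℝ) : Prop := ∀ τ j, 0 ≤ s τ j

/-- The last score value of every (nonempty) order type is zero. -/
def LastZeroSys (s : List ℕ → ℕ → ℝ) : Prop :=
  ∀ τ : List ℕ, τ ≠ [] → s τ (τ.length - 1) = 0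

/-- Monotonicity of a scoring system: earlier indifference classes get weakly
higher scores. -/
def MonotoneSys (s : List ℕ → ℕ → ℝ) : Prop :=
  ∀ τ i j, i ≤ j → s τ j ≤ s τ i

section CloneHoverEtc

variable {C N : Type*}

/-- `X` is a clone set in the profile `P` relative to ambient candidate set `A`. -/
def IsCloneSet (P : N → WeakOrder C) (A X : Finset C) : Prop :=
  X ⊆ A ∧ ∀ i : N, ∀ c ∈ A, c ∉ X →
    (∀ x ∈ X, (P i).strict x c) ∨ (∀ x ∈ X, (P i).indiff x c) ∨
      (∀ x ∈ X, (P i).strict c x)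

/-- `w2` is obtained from `w` by a `c`-hover: `c` is alone in its (non-top)
indifference class in `w`, and in `w2` it is merged into the indifference class
directly above it, everything else being unchanged. -/
def IsCHover (w w2 : WeakOrder C) (c : C) : Prop :=
  (∀ x, x ≠ c → ¬ w.indiff c x) ∧
  (∃ b, w.strict b c) ∧
  (∀ a b, a ≠ c → (w2.rel a b ↔ w.rel a b)) ∧
  (∀ b, w2.rel c b ↔ (w.rel c b ∨ ((w.strict b c) ∧ ∀ y, w.strict y c → w.rel b y)))

/-- The sincere coarsening of `w` merging all candidates strictly preferred to
`b` into a single top indifference class, leaving the rest unchanged. -/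
def mergeAbove (w : WeakOrder C) (b : C) : WeakOrder C where
  rel u v := w.strict u b ∨ (¬ w.strict v b ∧ w.rel u v)
  total u v := by
    by_cases hu : w.strict u b
    · exact Or.inl (Or.inl hu)
    · by_cases hv : w.strict v b
      · exact Or.inr (Or.inl hv)
      · rcases w.total u v with h | h
        · exact Or.inl (Or.inr ⟨hv, h⟩)
        · exact Or.inr (Or.inr ⟨hu, h⟩)
  trans u v x huv hvx := by
    rcases huv with h | ⟨hv, huv⟩
    · exact Or.inl h
    · rcases hvx with h | ⟨hx, hvx⟩
      · exact absurd h hv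
      · exact Or.inr ⟨hx, w.trans _ _ _ huv hvx⟩

/-- Pairwise majority margin of `a` over `b`. -/
noncomputable def margin [Fintype N] (P : N → WeakOrder C) (a b : C) : ℤ :=
  ((Finset.univ.filter fun i => (P i).strict a b).card : ℤ) -
    ((Finset.univ.filter fun i => (P i).strict b a).card : ℤ)

end CloneHoverEtc

section STV

variable {C N : Type*} [DecidableEq C] [Fintype C] [Fintype N]

/-- The supporters of `c` among remaining candidates `R`: voters with `c` in
their top indifference class within `R`. -/
noncomputable def suppSet (P : N → WeakOrder C) (R : Finset C) (c : C) : Finset N :=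
  Finset.univ.filter fun i => ∀ d ∈ R, (P i).rel c d

/-- A state of the Approval-STV computation: remaining candidates, selected
candidates, and the budget of each voter. -/
structure STVState (C N : Type*) where
  R : Finset C
  W : Finset C
  b : N → ℝ

/-- One step of Approval-STV with quota `q`: either select an eligible candidate
(whose supporters hold strictly more than `q` budget), charging its supporters a
total of exactly `q`, or, if no candidate is eligible, eliminate some candidate. -/
inductive STVStep (P : N → WeakOrder C) (q : ℝ) : STVState C N → STVState C N → Prop
  | select (R W : Finset C) (b b' : N → ℝ) (c : C) (hc : c ∈ R)
      (helig : q < ∑ i ∈ suppSet P R c, b i)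
      (hpay : ∀ i ∉ suppSet P R c, b' i = b i)
      (hdec : ∀ i : N, b' i ≤ b i)
      (hnn : ∀ i : N, 0 ≤ b' i)
      (htot : ∑ i ∈ suppSet P R c, b' i = (∑ i ∈ suppSet P R c, b i) - q) :
      STVStep P q ⟨R, W, b⟩ ⟨R.erase c, insert c W, b'⟩
  | eliminate (R W : Finset C) (b : N → ℝ) (c : C) (hc : c ∈ R)
      (hnone : ∀ c' ∈ R, (∑ i ∈ suppSet P R c', b i) ≤ q) :
      STVStep P q ⟨R, W, b⟩ ⟨R.erase c, W, b⟩

/-- `W` is a possible outcome of an execution of Approval-STV with quota `q`: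
starting from all candidates remaining, empty committee and unit budgets, some
sequence of steps ends with no candidate remaining and committee `W`. -/
def IsSTVOutcome (P : N → WeakOrder C) (q : ℝ) (W : Finset C) : Prop :=
  ∃ b : N → ℝ,
    Relation.ReflTransGen (STVStep P q) ⟨Finset.univ, ∅, fun _ => 1⟩ ⟨∅, W, b⟩

/-- The closure of `T` with respect to the voter group `S`. -/
noncomputable def closureSet (P : N → WeakOrder C) (S : Finset N) (T : Finset C) :
    Finset C :=
  Finset.univ.filter fun c => ∃ i ∈ S, ∃ t ∈ T, (P i).rel c t

end STV

/-- A weak order is `T`-supporting if every member of `T` is ranked weakly above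
every non-member. -/
def IsTSupporting {C : Type*} (w : WeakOrder C) (T : Finset C) : Prop :=
  ∀ t ∈ T, ∀ c, c ∉ T → w.rel t c

/-- The invariant of an execution relative to a voter group `S` and a candidate set `T`: either
`ℓ` members of `T` are already selected, or at least `ℓ` of them are selected or remaining and
`S` has paid at most `q` per selected member of `T`. -/
def PSCInvariant {C N : Type*} [DecidableEq C] (q : ℝ) (ℓ : ℕ) (S : Finset N) (T : Finset C)
    (s : STVState C N) : Prop :=
  Disjoint s.R s.W ∧ (∀ i, 0 ≤ s.b i) ∧
    (ℓ ≤ (s.W ∩ T).card ∨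
      (ℓ ≤ (s.W ∩ T).card + (s.R ∩ T).card ∧
        (S.card : ℝ) - q * (s.W ∩ T).card ≤ ∑ i ∈ S, s.b i))

/-- Every weak order has a top element on a nonempty finite set. -/
lemma WeakOrder.exists_top {C : Type*} (w : WeakOrder C) (A : Finset C) (hA : A.Nonempty) :
    ∃ c ∈ A, ∀ d ∈ A, w.rel c d := by
  classical
  induction hA using Finset.Nonempty.cons_induction with
  | singleton a =>
    exact ⟨a, by simp, fun d hd => by
      rw [Finset.mem_singleton.mp hd]; exact (w.total a a).elim id id⟩
  | cons a s ha hs ih =>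
    obtain ⟨c, hc, hcd⟩ := ih
    have haa : w.rel a a := (w.total a a).elim id id
    rcases w.total a c with h | h
    · refine ⟨a, by simp, fun d hd => ?_⟩
      rcases Finset.mem_cons.mp hd with rfl | hd
      · exact haa
      · exact w.trans _ _ _ h (hcd d hd)
    · refine ⟨c, by simp [hc], fun d hd => ?_⟩
      rcases Finset.mem_cons.mp hd with rfl | hd
      · exact h
      · exact hcd d hd

lemma sum_biUnion_le_of_nonneg {C N : Type*} (A : Finset C) (f : C → Finset N) {b : N → ℝ}
    (hb : ∀ i, 0 ≤ b i) : ∑ i ∈ A.biUnion f, b i ≤ ∑ c ∈ A, ∑ i ∈ f c, b i := by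
  induction A using Finset.induction_on with
  | empty => simp
  | insert a s ha ih =>
    rw [Finset.biUnion_insert, Finset.sum_insert ha]
    have h := Finset.sum_union_inter (s₁ := f a) (s₂ := s.biUnion f) (f := b)
    have h0 : 0 ≤ ∑ i ∈ f a ∩ s.biUnion f, b i := Finset.sum_nonneg fun i _ => hb i
    linarith

lemma not_mem_suppSet_of_solid {C N : Type*} [DecidableEq C] [Fintype C] [Fintype N]
    {P : N → WeakOrder C} {S : Finset N} {T R : Finset C}
    (hsupp : ∀ i ∈ S, ∀ t ∈ T, ∀ c, c ∉ T → (P i).strict t c)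
    (hR : (R ∩ T).Nonempty) {c : C} (hc : c ∉ T) {i : N} (hi : i ∈ S) :
    i ∉ suppSet P R c := by
  obtain ⟨t, ht⟩ := hR
  rw [Finset.mem_inter] at ht
  intro h
  exact (hsupp i hi t ht.2 c hc).2 ((Finset.mem_filter.mp h).2 t ht.1)

/-- If a solid coalition owns more than `q` per remaining member of `T`, then one of these members
is eligible for selection. -/
lemma exists_eligible {C N : Type*} [DecidableEq C] [Fintype C] [Fintype N]
    {P : N → WeakOrder C} {q : ℝ} {S : Finset N} {T R : Finset C} {b : N → ℝ}
    (hsupp : ∀ i ∈ S, ∀ t ∈ T, ∀ c, c ∉ T → (P i).strict t c)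
    (hb : ∀ i, 0 ≤ b i) (hR : (R ∩ T).Nonempty)
    (hbud : q * (R ∩ T).card < ∑ i ∈ S, b i) :
    ∃ c ∈ R, q < ∑ i ∈ suppSet P R c, b i := by
  by_contra! hcon
  have hcover : S ⊆ (R ∩ T).biUnion (suppSet P R) := by
    intro i hi
    obtain ⟨c, hc, htop⟩ := (P i).exists_top R (hR.mono Finset.inter_subset_left)
    have hic : i ∈ suppSet P R c := Finset.mem_filter.mpr ⟨Finset.mem_univ i, htop⟩
    have hcT : c ∈ T := by
      by_contra hcT
      exact not_mem_suppSet_of_solid hsupp hR hcT hi hic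
    exact Finset.mem_biUnion.mpr ⟨c, Finset.mem_inter.mpr ⟨hc, hcT⟩, hic⟩
  have hle : ∑ i ∈ S, b i ≤ q * (R ∩ T).card := by
    calc ∑ i ∈ S, b i ≤ ∑ i ∈ (R ∩ T).biUnion (suppSet P R), b i :=
          Finset.sum_le_sum_of_subset_of_nonneg hcover fun i _ _ => hb i
      _ ≤ ∑ c ∈ R ∩ T, ∑ i ∈ suppSet P R c, b i :=
          sum_biUnion_le_of_nonneg _ _ hb
      _ ≤ ∑ c ∈ R ∩ T, q :=
          Finset.sum_le_sum fun c hc => hcon c (Finset.mem_inter.mp hc).1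
      _ = q * (R ∩ T).card := by rw [Finset.sum_const, nsmul_eq_mul, mul_comm]
  linarith

lemma PSCInvariant.step {C N : Type*} [DecidableEq C] [Fintype C] [Fintype N]
    {P : N → WeakOrder C} {q : ℝ} {ℓ : ℕ} {S : Finset N} {T : Finset C}
    (hS : (ℓ : ℝ) * q < S.card)
    (hsupp : ∀ i ∈ S, ∀ t ∈ T, ∀ c, c ∉ T → (P i).strict t c)
    {s s' : STVState C N} (hstep : STVStep P q s s') (hs : PSCInvariant q ℓ S T s) :
    PSCInvariant q ℓ S T s' := by
  obtain ⟨hdisj, hb, hs⟩ := hs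
  cases hstep with
  | select R W b b' c hc helig hpay hdec hnn htot =>
    simp only at hdisj hb hs
    have hcW : c ∉ W := Finset.disjoint_left.mp hdisj hc
    refine ⟨?_, hnn, ?_⟩
    · rw [Finset.disjoint_left] at hdisj ⊢
      intro x hx
      rw [Finset.mem_erase] at hx
      simp [hx.1, hdisj hx.2]
    simp only
    by_cases hdone : ℓ ≤ (W ∩ T).card
    · exact Or.inl (hdone.trans (Finset.card_le_card
        (Finset.inter_subset_inter_right (Finset.subset_insert c W))))
    obtain ⟨hcard, hbud⟩ := hs.resolve_left hdone
    right
    by_cases hcT : c ∈ T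
    · have hWc : (insert c W ∩ T).card = (W ∩ T).card + 1 := by
        rw [Finset.insert_inter_of_mem hcT, Finset.card_insert_of_notMem (by simp [hcW])]
      have hRc : ((R.erase c) ∩ T).card + 1 = (R ∩ T).card := by
        rw [Finset.erase_inter, Finset.card_erase_add_one (Finset.mem_inter.mpr ⟨hc, hcT⟩)]
      have hpaid : ∑ i ∈ S, (b i - b' i) ≤ q := by
        calc ∑ i ∈ S, (b i - b' i) ≤ ∑ i, (b i - b' i) :=
              Finset.sum_le_sum_of_subset_of_nonneg (Finset.subset_univ S)
                fun i _ _ => sub_nonneg.mpr (hdec i)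
          _ = ∑ i ∈ suppSet P R c, (b i - b' i) :=
              (Finset.sum_subset (Finset.subset_univ _) fun i _ hi => by
                rw [hpay i hi, sub_self]).symm
          _ = q := by rw [Finset.sum_sub_distrib, htot]; ring
      rw [Finset.sum_sub_distrib] at hpaid
      refine ⟨by omega, ?_⟩
      rw [hWc]
      push_cast
      linarith
    · have hR : (R ∩ T).Nonempty := by
        rw [← Finset.card_pos]; omega
      have hsum : ∑ i ∈ S, b' i = ∑ i ∈ S, b i :=
        Finset.sum_congr rfl fun i hi =>
          hpay i (not_mem_suppSet_of_solid hsupp hR hcT hi)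
      have hRc : (R.erase c) ∩ T = R ∩ T := by
        rw [Finset.erase_inter, Finset.erase_eq_of_notMem (by simp [hcT])]
      rw [Finset.insert_inter_of_notMem hcT, hRc, hsum]
      exact ⟨hcard, hbud⟩
  | eliminate R W b c hc hnone =>
    simp only at hdisj hb hs
    refine ⟨hdisj.mono_left (Finset.erase_subset c R), hb, ?_⟩
    simp only
    by_cases hdone : ℓ ≤ (W ∩ T).card
    · exact Or.inl hdone
    obtain ⟨hcard, hbud⟩ := hs.resolve_left hdone
    refine Or.inr ⟨?_, hbud⟩
    by_cases hcT : c ∈ T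
    · have hRc : ((R.erase c) ∩ T).card + 1 = (R ∩ T).card := by
        rw [Finset.erase_inter, Finset.card_erase_add_one (Finset.mem_inter.mpr ⟨hc, hcT⟩)]
      by_contra hlt
      have hR : (R ∩ T).Nonempty := ⟨c, Finset.mem_inter.mpr ⟨hc, hcT⟩⟩
      have heq : ℓ = (W ∩ T).card + (R ∩ T).card := by omega
      have heq' : (ℓ : ℝ) = (W ∩ T).card + (R ∩ T).card := by exact_mod_cast heq
      have hrich : q * (R ∩ T).card < ∑ i ∈ S, b i := by
        rw [heq'] at hS
        linarith
      obtain ⟨d, hd, hdq⟩ := exists_eligible hsupp hb hR hrich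
      exact absurd (hnone d hd) (not_le.mpr hdq)
    · rwa [Finset.erase_inter, Finset.erase_eq_of_notMem (by simp [hcT])]

/-- Linear-order STV satisfies Proportionality for Solid
Coalitions: for every profile of linear orders (weak orders that are
antisymmetric), every committee `W` returned by any execution of Approval-STV
(which coincides with classic STV on linear-order profiles) with quota
`q = n/(k+1)`, every `ℓ ≥ 1`, every voter group `S` with `|S| > ℓ·q`, and every
`T` with `|T| ≥ ℓ` such that every voter in `S` ranks every candidate of `T`
strictly above every candidate outside `T`, we have `|W ∩ T| ≥ ℓ`. -/
theorem linear_STV_satisfies_PSC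
    {C N : Type*} [Fintype C] [DecidableEq C] [Fintype N]
    (k : ℕ) (P : N → WeakOrder C)
    (hlin : ∀ i a b, (P i).rel a b → (P i).rel b a → a = b)
    (W : Finset C)
    (hW : IsSTVOutcome P ((Fintype.card N : ℝ) / (k + 1)) W)
    (ℓ : ℕ) (hℓ : 1 ≤ ℓ) (S : Finset N) (T : Finset C)
    (hS : (ℓ : ℝ) * ((Fintype.card N : ℝ) / (k + 1)) < S.card)
    (hT : ℓ ≤ T.card)
    (hsupp : ∀ i ∈ S, ∀ t ∈ T, ∀ c, c ∉ T → (P i).strict t c) :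
    ℓ ≤ (W ∩ T).card := by
  obtain ⟨b, hrun⟩ := hW
  have hinv : PSCInvariant ((Fintype.card N : ℝ) / (k + 1)) ℓ S T ⟨∅, W, b⟩ := by
    refine Relation.ReflTransGen.head_induction_on
      (motive := fun s _ => PSCInvariant ((Fintype.card N : ℝ) / (k + 1)) ℓ S T s →
        PSCInvariant ((Fintype.card N : ℝ) / (k + 1)) ℓ S T ⟨∅, W, b⟩)
      hrun id (fun hstep _ ih hs => ih (hs.step hS hsupp hstep)) ?_
    exact ⟨by simp, fun _ => zero_le_one, Or.inr ⟨by simpa using hT, by simp⟩⟩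
  rcases hinv.2.2 with h | ⟨h, _⟩
  · exact h
  · simpa using h
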